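/- arXiv:1601.05706 — 2 statements merged into one kernel-verified Lean document; each statement's English description precedes it below -/
import Mathlib

section
/- For every integer m ≥ 1, the infinite series ∑_{j=0}^∞ B(m,j)/2^{m+2j} converges to 1; equivalently, ∑_{j=0}^∞ (m/(2j+m))·C(2j+m, j)·(1/4)^j = 2^m as an identity of real numbers. -/
/-!
Let `c = ∑ Cⱼ xʲ` be the generating function of the Catalan numbers `Cⱼ = B(1, j)`. The recursion
`B(m + 1, j + 1) = B(m, j + 1) + B(m + 2, j)` and the quadratic equation `c = 1 + x c²` give
`∑ B(m, j) xʲ = cᵐ` by two-step induction on `m`. At `x = 1/4` the quadratic has the double root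
`c = 2`, so convergence of the Catalan series alone determines its value there.
-/

open Finset

/-- The ballot number `B(m, j) = m / (2j + m) * C(2j + m, j)`, encoded as the difference of binomial
coefficients given by the reflection principle. The indeterminate `B(0, 0)` is taken to be `1`, so
that the constant term of `∑ B(m, j) xʲ` is `1` for every `m`. -/
def ballotNumber : ℕ → ℕ → ℤ
  | _, 0 => 1
  | m, j + 1 => (2 * j + m + 1).choose (j + 1) - (2 * j + m + 1).choose j

namespace ballotNumber

theorem zero_right (m : ℕ) : ballotNumber m 0 = 1 := rfl

theorem succ_right (m j : ℕ) :
    ballotNumber m (j + 1) = (2 * j + m + 1).choose (j + 1) - (2 * j + m + 1).choose j := rfl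

theorem zero_succ (j : ℕ) : ballotNumber 0 (j + 1) = 0 := by
  rw [succ_right, add_zero, Nat.choose_symm_half, sub_self]

theorem succ_succ (m j : ℕ) :
    ballotNumber (m + 1) (j + 1) = ballotNumber m (j + 1) + ballotNumber (m + 2) j := by
  cases j with
  | zero =>
    simp only [succ_right, zero_right, zero_add, mul_zero, Nat.choose_one_right,
      Nat.choose_zero_right]
    push_cast
    ring
  | succ j =>
    have pascal (k : ℕ) : (2 * (j + 1) + (m + 1) + 1).choose (k + 1) =
        (2 * (j + 1) + m + 1).choose k + (2 * (j + 1) + m + 1).choose (k + 1) :=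
      Nat.choose_succ_succ _ k
    rw [succ_right, succ_right, succ_right, pascal, pascal,
      show 2 * j + (m + 2) + 1 = 2 * (j + 1) + m + 1 by ring]
    push_cast
    ring

theorem add_mul_eq_mul_choose (m j : ℕ) :
    (2 * j + m) * ballotNumber m j = m * (2 * j + m).choose j := by
  cases j with
  | zero => simp [zero_right]
  | succ j =>
    have absorb : ((2 * j + m + 2) * (2 * j + m + 1).choose j : ℤ) =
        (2 * (j + 1) + m).choose (j + 1) * (j + 1) := by
      rw [show 2 * (j + 1) + m = 2 * j + m + 1 + 1 by ring]
      exact_mod_cast Nat.add_one_mul_choose_eq (2 * j + m + 1) j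
    have ratio : ((2 * j + m + 1).choose (j + 1) * (j + 1) : ℤ) =
        (2 * j + m + 1).choose j * (j + m + 1) := by
      have h := Nat.choose_succ_right_eq (2 * j + m + 1) j
      rw [show 2 * j + m + 1 - j = j + m + 1 by lia] at h
      exact_mod_cast h
    have hj : (j + 1 : ℤ) ≠ 0 := by positivity
    apply mul_right_cancel₀ hj
    rw [succ_right]
    push_cast
    linear_combination (2 * j + m + 2) * ratio + m * absorb

theorem cast_eq_div_mul_choose {K : Type*} [Field K] [CharZero K] {m : ℕ} (hm : m ≠ 0) (j : ℕ) :
    (ballotNumber m j : K) = m / (2 * j + m) * (2 * j + m).choose j := by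
  have hjm : (2 * j + m : K) ≠ 0 := mod_cast (by lia : 2 * j + m ≠ 0)
  rw [div_mul_eq_mul_div, eq_div_iff hjm, mul_comm]
  exact_mod_cast congrArg (Int.cast : ℤ → K) (add_mul_eq_mul_choose m j)

theorem one_left (j : ℕ) : ballotNumber 1 j = catalan j := by
  have closed_form : (2 * j + 1) * ballotNumber 1 j = (2 * j + 1).choose j := by
    simpa using add_mul_eq_mul_choose 1 j
  have catalan_form : ((j + 1) * catalan j : ℤ) = (2 * j).choose j :=
    mod_cast succ_mul_catalan_eq_centralBinom j
  have ratio : ((2 * j).choose j * (2 * j + 1) : ℤ) = (2 * j + 1).choose j * (j + 1) := by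
    have h := Nat.choose_mul_succ_eq (2 * j) j
    rw [show 2 * j + 1 - j = j + 1 by lia] at h
    exact_mod_cast h
  have hj : ((j + 1) * (2 * j + 1) : ℤ) ≠ 0 := by positivity
  apply mul_left_cancel₀ hj
  linear_combination (j + 1) * closed_form - (2 * j + 1) * catalan_form - ratio

end ballotNumber

section GeneratingFunction

variable {𝕜 : Type*} {x c : 𝕜}

theorem catalan_series_eq_one_add_mul_sq [NormedField 𝕜]
    (hs : Summable fun j : ℕ => ‖(catalan j : 𝕜) * x ^ j‖)
    (hc : HasSum (fun j : ℕ => (catalan j : 𝕜) * x ^ j) c) : c = 1 + x * c ^ 2 := by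
  have convolution (n : ℕ) : (catalan (n + 1) : 𝕜) * x ^ (n + 1) =
      x * ∑ p ∈ antidiagonal n, (catalan p.1 : 𝕜) * x ^ p.1 * (catalan p.2 * x ^ p.2) := by
    rw [catalan_succ', Nat.cast_sum, sum_mul, mul_sum]
    refine sum_congr rfl fun p hp => ?_
    rw [← mem_antidiagonal.mp hp]
    push_cast
    ring
  have cauchy : c ^ 2 = ∑' n, ∑ p ∈ antidiagonal n,
      (catalan p.1 : 𝕜) * x ^ p.1 * (catalan p.2 * x ^ p.2) := by
    rw [← tsum_mul_tsum_eq_tsum_sum_antidiagonal_of_summable_norm' hs hc.summable hs hc.summable,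
      hc.tsum_eq, sq]
  calc c = 1 + ∑' n : ℕ, (catalan (n + 1) : 𝕜) * x ^ (n + 1) := by
        rw [← hc.tsum_eq, hc.summable.tsum_eq_zero_add, catalan_zero, Nat.cast_one, pow_zero,
          one_mul]
    _ = 1 + x * c ^ 2 := by simp_rw [convolution, tsum_mul_left, cauchy]

theorem hasSum_ballotNumber_mul_pow [Field 𝕜] [TopologicalSpace 𝕜] [IsTopologicalRing 𝕜]
    (hx : x ≠ 0) (hc : HasSum (fun j : ℕ => (catalan j : 𝕜) * x ^ j) c)
    (hquad : c = 1 + x * c ^ 2) (m : ℕ) :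
    HasSum (fun j : ℕ => (ballotNumber m j : 𝕜) * x ^ j) (c ^ m) := by
  have tail {k : ℕ} {s : 𝕜} (h : HasSum (fun j : ℕ => (ballotNumber k j : 𝕜) * x ^ j) s) :
      HasSum (fun j : ℕ => (ballotNumber k (j + 1) : 𝕜) * x ^ (j + 1)) (s - 1) := by
    simpa [ballotNumber.zero_right] using (hasSum_nat_add_iff' 1).mpr h
  induction m using Nat.twoStepInduction with
  | zero =>
    have vanish (j : ℕ) (hj : j ≠ 0) : (ballotNumber 0 j : 𝕜) * x ^ j = 0 := by
      obtain ⟨i, rfl⟩ := Nat.exists_eq_succ_of_ne_zero hj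
      simp [ballotNumber.zero_succ]
    simpa [ballotNumber.zero_right] using hasSum_single 0 vanish
  | one => simpa [ballotNumber.one_left] using hc
  | more m ih₀ ih₁ =>
    have term (j : ℕ) : (ballotNumber (m + 2) j : 𝕜) * x ^ j =
        x⁻¹ * (ballotNumber (m + 1) (j + 1) * x ^ (j + 1) -
          ballotNumber m (j + 1) * x ^ (j + 1)) := by
      rw [ballotNumber.succ_succ]
      push_cast
      field_simp
      ring
    have total : c ^ (m + 2) = x⁻¹ * ((c ^ (m + 1) - 1) - (c ^ m - 1)) := by
      rw [eq_inv_mul_iff_mul_eq₀ hx]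
      linear_combination -c ^ m * hquad
    simp_rw [term, total]
    exact ((tail ih₁).sub (tail ih₀)).mul_left x⁻¹

end GeneratingFunction

theorem centralBinom_succ_add_two_mul_catalan (n : ℕ) :
    (n + 1).centralBinom + 2 * catalan n = 4 * n.centralBinom := by
  apply Nat.eq_of_mul_eq_mul_left (Nat.add_one_pos n)
  linear_combination Nat.succ_mul_centralBinom_succ n + 2 * succ_mul_catalan_eq_centralBinom n

theorem sum_range_catalan_mul_one_div_four_pow {K : Type*} [Field K] [CharZero K] (n : ℕ) :
    ∑ j ∈ range n, (catalan j : K) * (1 / 4) ^ j = 2 - 2 * n.centralBinom * (1 / 4) ^ n := by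
  induction n with
  | zero => simp
  | succ n ih =>
    have h : ((n + 1).centralBinom + 2 * catalan n : K) = 4 * n.centralBinom :=
      mod_cast centralBinom_succ_add_two_mul_catalan n
    rw [sum_range_succ, ih, pow_succ]
    linear_combination (1 / 4) ^ n / 2 * h

theorem summable_catalan_mul_one_div_four_pow :
    Summable fun j : ℕ => (catalan j : ℝ) * (1 / 4) ^ j := by
  refine summable_of_sum_range_le (c := 2) (fun j => by positivity) fun n => ?_
  rw [sum_range_catalan_mul_one_div_four_pow]
  exact sub_le_self _ (by positivity)

theorem hasSum_catalan_mul_one_div_four_pow :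
    HasSum (fun j : ℕ => (catalan j : ℝ) * (1 / 4) ^ j) 2 := by
  obtain ⟨c, hc⟩ := summable_catalan_mul_one_div_four_pow
  have hquad : c = 1 + 1 / 4 * c ^ 2 := catalan_series_eq_one_add_mul_sq hc.summable.norm hc
  have double_root : (c - 2) ^ 2 = 0 := by linear_combination -4 * hquad
  rwa [sub_eq_zero.mp (pow_eq_zero_iff two_ne_zero |>.mp double_root)] at hc

theorem ballot_series_sums_to_one (m : ℕ) (hm : 1 ≤ m) :
    HasSum (fun j : ℕ =>
      ((m : ℝ) / (2 * j + m)) * (Nat.choose (2 * j + m) j) / 2 ^ (m + 2 * j)) 1 := by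
  have hgf : HasSum (fun j : ℕ => (ballotNumber m j : ℝ) * (1 / 4) ^ j) (2 ^ m) :=
    hasSum_ballotNumber_mul_pow (by norm_num) hasSum_catalan_mul_one_div_four_pow (by norm_num) m
  have term (j : ℕ) : (m : ℝ) / (2 * j + m) * (2 * j + m).choose j / 2 ^ (m + 2 * j) =
      ballotNumber m j * (1 / 4) ^ j / 2 ^ m := by
    rw [ballotNumber.cast_eq_div_mul_choose (Nat.one_le_iff_ne_zero.mp hm), pow_add, pow_mul,
      one_div_pow]
    norm_num
    field_simp
  simp_rw [term]
  simpa using hgf.div_const (2 ^ m)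
end

section
/- For every integer m ≥ 1 and every real number x with 0 < x ≤ 1/4, the series ∑_{j=0}^∞ B(m,j)·x^j converges and equals ((1 − √(1 − 4x))/(2x))^m, where B(m,j) = (m/(2j+m))·C(2j+m, j). -/
/-!
Let `C` be the Catalan series, so that `C = 1 + X * C ^ 2`. Multiplying by `C ^ m` gives
`C ^ (m + 1) = C ^ m + X * C ^ (m + 2)`, a recurrence that identifies the coefficients of `C ^ m`
with the ballot numbers `B(m, j)`.

Analytically, `∑ catalan n / 4 ^ n` telescopes to at most `2`, so for `‖x‖ ≤ 1 / 4` the series `C`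
converges absolutely at `x` to some `c` with `‖c‖ ≤ 2`, and Cauchy products give `C ^ m ↦ c ^ m`.
The equation `c = 1 + x * c ^ 2` says that `1 - 2 * x * c` is a square root of `1 - 4 * x`. As
`‖2 * x * c‖ ≤ 1`, it is the one with nonnegative real part, even when `‖x‖ = 1 / 4`.
-/

open PowerSeries
open Finset.HasAntidiagonal (antidiagonal mem_antidiagonal)

section AbsolutelyConvergentEvaluation

variable {R : Type*} [NormedCommRing R] {f g : R⟦X⟧} {x s t : R}

/-- The power series `f` converges absolutely at `x`, with sum `s`. Absolute convergence at the
point itself, rather than inside a disc, allows evaluation on the circle of convergence. -/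
structure HasAbsSum (f : R⟦X⟧) (x s : R) : Prop where
  summable_norm : Summable fun n ↦ ‖coeff n f * x ^ n‖
  hasSum : HasSum (fun n ↦ coeff n f * x ^ n) s

namespace HasAbsSum

theorem unique (hs : HasAbsSum f x s) (ht : HasAbsSum f x t) : s = t :=
  hs.hasSum.unique ht.hasSum

theorem add (hf : HasAbsSum f x s) (hg : HasAbsSum g x t) : HasAbsSum (f + g) x (s + t) where
  summable_norm := by
    refine .of_nonneg_of_le (fun _ ↦ norm_nonneg _) (fun n ↦ ?_)
      (hf.summable_norm.add hg.summable_norm)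
    rw [map_add, add_mul]
    exact norm_add_le _ _
  hasSum := by simpa only [map_add, add_mul] using hf.hasSum.add hg.hasSum

theorem monomial (k : ℕ) (a x : R) : HasAbsSum (monomial k a) x (a * x ^ k) := by
  have vanish (n : ℕ) (hn : n ≠ k) : coeff n (PowerSeries.monomial k a) * x ^ n = 0 := by
    rw [coeff_monomial, if_neg hn, zero_mul]
  constructor
  · exact (hasSum_single k fun n hn ↦ by rw [vanish n hn, norm_zero]).summable
  · simpa only [coeff_monomial_same] using hasSum_single k vanish

theorem one (x : R) : HasAbsSum 1 x 1 := by
  simpa only [monomial_zero_eq_C_apply, map_one, pow_zero, mul_one] using monomial 0 1 x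

theorem X (x : R) : HasAbsSum X x x := by
  simpa only [X_eq, pow_one, one_mul] using monomial 1 1 x

variable [CompleteSpace R]

theorem mul (hf : HasAbsSum f x s) (hg : HasAbsSum g x t) : HasAbsSum (f * g) x (s * t) := by
  have coeff_mul_mul_pow (n : ℕ) : coeff n (f * g) * x ^ n =
      ∑ ij ∈ antidiagonal n, (coeff ij.1 f * x ^ ij.1) * (coeff ij.2 g * x ^ ij.2) := by
    rw [coeff_mul, Finset.sum_mul]
    refine Finset.sum_congr rfl fun ij hij ↦ ?_
    rw [← mem_antidiagonal.mp hij, pow_add, mul_mul_mul_comm]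
  have summable : Summable fun n ↦ ‖coeff n (f * g) * x ^ n‖ := by
    simpa only [coeff_mul_mul_pow] using
      summable_norm_sum_mul_antidiagonal_of_summable_norm hf.summable_norm hg.summable_norm
  refine ⟨summable, ?_⟩
  have tsum_eq := tsum_mul_tsum_eq_tsum_sum_antidiagonal_of_summable_norm
    hf.summable_norm hg.summable_norm
  simp only [← coeff_mul_mul_pow, hf.hasSum.tsum_eq, hg.hasSum.tsum_eq] at tsum_eq
  exact tsum_eq ▸ summable.of_norm.hasSum

theorem pow (hf : HasAbsSum f x s) (m : ℕ) : HasAbsSum (f ^ m) x (s ^ m) := by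
  induction m with
  | zero => simpa only [pow_zero] using one x
  | succ m ih => simpa only [pow_succ] using ih.mul hf

end HasAbsSum

end AbsolutelyConvergentEvaluation

section BallotNumbers

theorem coeff_succ_catalanSeries_pow_succ (m j : ℕ) :
    coeff (j + 1) (catalanSeries ^ (m + 1)) =
      coeff (j + 1) (catalanSeries ^ m) + coeff j (catalanSeries ^ (m + 2)) := by
  have pow_eq : catalanSeries ^ (m + 1) = catalanSeries ^ m + catalanSeries ^ (m + 2) * X := by
    calc catalanSeries ^ (m + 1)
        = catalanSeries ^ m * (catalanSeries ^ 2 * X + 1) := by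
          rw [catalanSeries_sq_mul_X_add_one, pow_succ]
      _ = catalanSeries ^ m + catalanSeries ^ (m + 2) * X := by ring
  rw [pow_eq, map_add, coeff_succ_mul_X]

theorem mul_coeff_catalanSeries_pow (m j : ℕ) :
    (2 * j + m) * coeff j (catalanSeries ^ m) = m * (2 * j + m).choose j := by
  induction j generalizing m with
  | zero => simp
  | succ j ih =>
    induction m with
    | zero => simp [coeff_one]
    | succ m ihm =>
      have left_term : (2 * j + m + 2) * coeff (j + 1) (catalanSeries ^ m) =
          m * (2 * j + m + 2).choose (j + 1) := by
        rw [← show 2 * (j + 1) + m = 2 * j + m + 2 by ring]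
        exact ihm
      have right_term : (2 * j + m + 2) * coeff j (catalanSeries ^ (m + 2)) =
          (m + 2) * (2 * j + m + 2).choose j := ih (m + 2)
      have absorb : (2 * j + m + 2).choose (j + 1) * (j + 1) =
          (2 * j + m + 2).choose j * (j + m + 2) := by
        rw [Nat.choose_succ_right_eq, show 2 * j + m + 2 - j = j + m + 2 by omega]
      rw [coeff_succ_catalanSeries_pow_succ,
        show 2 * (j + 1) + (m + 1) = (2 * j + m + 2) + 1 by ring, Nat.choose_succ_succ]
      apply Nat.eq_of_mul_eq_mul_left (show 0 < 2 * j + m + 2 by omega)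
      zify at left_term right_term absorb ⊢
      linear_combination (2 * j + m + 3 : ℤ) * (left_term + right_term) - 2 * absorb

theorem cast_coeff_catalanSeries_pow (K : Type*) [Field K] [CharZero K] {m : ℕ} (hm : m ≠ 0)
    (j : ℕ) : ((coeff j (catalanSeries ^ m) : ℕ) : K) = m / (2 * j + m) * (2 * j + m).choose j := by
  have denom_ne_zero : (2 * j + m : K) ≠ 0 := by
    exact_mod_cast (by omega : 2 * j + m ≠ 0)
  rw [div_mul_eq_mul_div, eq_div_iff denom_ne_zero, mul_comm]
  exact_mod_cast mul_coeff_catalanSeries_pow m j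

end BallotNumbers

section CatalanSum

theorem sum_range_catalan_mul_inv_four_pow (N : ℕ) :
    ∑ n ∈ Finset.range N, (catalan n : ℝ) * (1 / 4) ^ n =
      2 - 2 * (N.centralBinom * (1 / 4) ^ N) := by
  induction N with
  | zero => simp
  | succ N ih =>
    have catalan_eq : ((N : ℝ) + 1) * catalan N = N.centralBinom := by
      exact_mod_cast succ_mul_catalan_eq_centralBinom N
    have centralBinom_succ : ((N : ℝ) + 1) * (N + 1).centralBinom =
        2 * (2 * N + 1) * N.centralBinom := by
      exact_mod_cast Nat.succ_mul_centralBinom_succ N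
    rw [Finset.sum_range_succ, ih]
    apply mul_left_cancel₀ (show (N : ℝ) + 1 ≠ 0 by positivity)
    linear_combination (1 / 4 : ℝ) ^ N * (catalan_eq + centralBinom_succ / 2)

theorem sum_range_catalan_mul_inv_four_pow_le_two (N : ℕ) :
    ∑ n ∈ Finset.range N, (catalan n : ℝ) * (1 / 4) ^ n ≤ 2 := by
  rw [sum_range_catalan_mul_inv_four_pow]
  exact sub_le_self _ (by positivity)

variable {R : Type*} [NormedCommRing R] [CompleteSpace R] {x c : R}

theorem exists_hasAbsSum_catalanSeries [NormOneClass R] (hx : ‖x‖ ≤ 1 / 4) :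
    ∃ c : R, HasAbsSum (catalanSeries.map (Nat.castRingHom R)) x c ∧ ‖c‖ ≤ 2 := by
  have norm_le (n : ℕ) :
      ‖coeff n (catalanSeries.map (Nat.castRingHom R)) * x ^ n‖ ≤ catalan n * (1 / 4) ^ n := by
    calc ‖coeff n (catalanSeries.map (Nat.castRingHom R)) * x ^ n‖
        = ‖(catalan n : R) * x ^ n‖ := by
          rw [coeff_map, catalanSeries_coeff, Nat.coe_castRingHom]
      _ ≤ ‖(catalan n : R)‖ * ‖x ^ n‖ := norm_mul_le _ _
      _ ≤ catalan n * (1 / 4) ^ n := by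
          gcongr
          · simpa only [norm_one, mul_one] using Nat.norm_cast_le (α := R) (catalan n)
          · exact (norm_pow_le x n).trans (by gcongr)
  have sum_le (N : ℕ) : ∑ n ∈ Finset.range N,
      ‖coeff n (catalanSeries.map (Nat.castRingHom R)) * x ^ n‖ ≤ 2 :=
    (Finset.sum_le_sum fun n _ ↦ norm_le n).trans (sum_range_catalan_mul_inv_four_pow_le_two N)
  have summable := summable_of_sum_range_le (fun _ ↦ norm_nonneg _) sum_le
  exact ⟨_, ⟨summable, summable.of_norm.hasSum⟩,
    (norm_tsum_le_tsum_norm summable).trans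
      (Real.tsum_le_of_sum_range_le (fun _ ↦ norm_nonneg _) sum_le)⟩

theorem HasAbsSum.catalanSeries_sq_mul_add_one
    (hc : HasAbsSum (catalanSeries.map (Nat.castRingHom R)) x c) : c ^ 2 * x + 1 = c := by
  have series_eq := congrArg (PowerSeries.map (Nat.castRingHom R)) catalanSeries_sq_mul_X_add_one
  simp only [map_add, map_mul, map_pow, map_one, map_X] at series_eq
  have evaluated := ((hc.pow 2).mul (HasAbsSum.X x)).add (HasAbsSum.one x)
  rw [series_eq] at evaluated
  exact evaluated.unique hc

end CatalanSum

section SquareRoot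

variable {𝕜 : Type*} [RCLike 𝕜]

theorem eq_zero_of_re_nonpos_of_norm_one_sub_le_one {u : 𝕜} (hre : RCLike.re u ≤ 0)
    (hu : ‖1 - u‖ ≤ 1) : u = 0 := by
  have norm_sq_eq : ‖1 - u‖ ^ 2 = 1 - 2 * RCLike.re u + ‖u‖ ^ 2 := by
    rw [@norm_sub_sq 𝕜, norm_one, one_pow, RCLike.inner_apply, map_one, mul_one]
  have norm_sq_le : ‖1 - u‖ ^ 2 ≤ 1 := pow_le_one₀ (norm_nonneg _) hu
  rw [← norm_eq_zero, ← sq_eq_zero_iff]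
  exact le_antisymm (by linarith) (sq_nonneg _)

theorem eq_of_sq_eq_sq_of_norm_one_sub_le_one {s u : 𝕜} (h : u ^ 2 = s ^ 2)
    (hs : 0 ≤ RCLike.re s) (hu : ‖1 - u‖ ≤ 1) : u = s := by
  obtain h_eq | h_neg := sq_eq_sq_iff_eq_or_eq_neg.mp h
  · exact h_eq
  · have re_nonpos : RCLike.re u ≤ 0 := by
      rw [h_neg, map_neg]
      exact neg_nonpos.mpr hs
    have u_eq_zero := eq_zero_of_re_nonpos_of_norm_one_sub_le_one re_nonpos hu
    rw [u_eq_zero, zero_eq_neg] at h_neg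
    rw [u_eq_zero, h_neg]

theorem HasAbsSum.catalanSeries_eq_one_sub_div {x c s : 𝕜}
    (hc : HasAbsSum (catalanSeries.map (Nat.castRingHom 𝕜)) x c) (hc2 : ‖c‖ ≤ 2)
    (hx : x ≠ 0) (hx4 : ‖x‖ ≤ 1 / 4) (hs : s ^ 2 = 1 - 4 * x) (hs0 : 0 ≤ RCLike.re s) :
    c = (1 - s) / (2 * x) := by
  have sq_eq : (1 - 2 * x * c) ^ 2 = s ^ 2 := by
    linear_combination 4 * x * hc.catalanSeries_sq_mul_add_one - hs
  have norm_le : ‖1 - (1 - 2 * x * c)‖ ≤ 1 := by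
    calc ‖1 - (1 - 2 * x * c)‖ = 2 * ‖x‖ * ‖c‖ := by
          rw [sub_sub_cancel, norm_mul, norm_mul, RCLike.norm_ofNat]
      _ ≤ 2 * (1 / 4) * 2 := by gcongr
      _ = 1 := by norm_num
  rw [eq_div_iff (mul_ne_zero two_ne_zero hx)]
  linear_combination -eq_of_sq_eq_sq_of_norm_one_sub_le_one sq_eq hs0 norm_le

end SquareRoot

theorem ballot_generating_function_general {𝕜 : Type*} [RCLike 𝕜] {m : ℕ} (hm : m ≠ 0) {x s : 𝕜}
    (hx : x ≠ 0) (hx4 : ‖x‖ ≤ 1 / 4) (hs : s ^ 2 = 1 - 4 * x) (hs0 : 0 ≤ RCLike.re s) :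
    HasSum (fun j : ℕ ↦ (m : 𝕜) / (2 * j + m) * (2 * j + m).choose j * x ^ j)
      (((1 - s) / (2 * x)) ^ m) := by
  obtain ⟨c, hc, hc2⟩ := exists_hasAbsSum_catalanSeries hx4
  rw [← hc.catalanSeries_eq_one_sub_div hc2 hx hx4 hs hs0]
  simpa only [← map_pow, coeff_map, Nat.coe_castRingHom, cast_coeff_catalanSeries_pow 𝕜 hm]
    using (hc.pow m).hasSum

theorem ballot_generating_function (m : ℕ) (hm : 1 ≤ m) (x : ℝ) (hx : 0 < x)
    (hx4 : x ≤ 1 / 4) :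
    HasSum (fun j : ℕ => ((m : ℝ) / (2 * j + m)) * (Nat.choose (2 * j + m) j) * x ^ j)
      (((1 - Real.sqrt (1 - 4 * x)) / (2 * x)) ^ m) :=
  ballot_generating_function_general (by omega) hx.ne' (by rwa [Real.norm_of_nonneg hx.le])
    (Real.sq_sqrt (by linarith)) (Real.sqrt_nonneg _)
end
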